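/- Deriv(𝒫_𝒞) is the disjoint union Deriv(𝒫_𝒞) = Deriv⊕ ⨿ Deriv⊖, where Deriv⊕ = {(X^{⟨u⟩} u, Y^{⟨v⟩} v) : (X.u, Y.v) ∈ Deriv'(𝒫_𝒞)} and Deriv⊖ = {(Y^{⊖·⟨v⟩} v, X^{⊖·⟨u⟩} u) : (X.u, Y.v) ∈ Deriv'(𝒫_𝒞)}; in particular Deriv(𝒫_𝒞) can be entirely reconstructed from Deriv'(𝒫_𝒞). -/

import Mathlib

/-- The two-element sign monoid `{⊕, ⊖}` of variances. -/
inductive Sign : Type where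
  | pos
  | neg
deriving DecidableEq, Repr

/-- Multiplication in the sign monoid (`⊕` is the identity, `⊖ · ⊖ = ⊕`). -/
def Sign.mul : Sign → Sign → Sign
  | .pos, s => s
  | .neg, .pos => .neg
  | .neg, .neg => .pos

/-- Variance of a word in `Σ*`: `⟨ε⟩ = ⊕`, `⟨xw⟩ = ⟨x⟩·⟨w⟩`. -/
def wordSign {L : Type} (sgn : L → Sign) : List L → Sign
  | [] => .pos
  | x :: w => (sgn x).mul (wordSign sgn w)

/-- A derived type variable `α.w` with base type variable `α ∈ 𝒱` and word `w ∈ Σ*`. -/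
structure DTV (V L : Type) : Type where
  base : V
  word : List L

/-- Appending a single field label to a derived type variable: `α.ℓ`. -/
def DTV.app {V L : Type} (α : DTV V L) (ℓ : L) : DTV V L :=
  ⟨α.base, α.word ++ [ℓ]⟩

/-- A constraint: either `VAR X` or `X ⊑ Y` for derived type variables. -/
inductive Constraint (V L : Type) : Type where
  | var : DTV V L → Constraint V L
  | sub : DTV V L → DTV V L → Constraint V L

/-- Entailment `𝒞 ⊢ c`: the least relation containing `𝒞` and closed under the
deduction rules T-Left, T-Right, T-InheritL, T-InheritR, T-Prefix, S-Refl,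
S-Trans, S-Field⊕, S-Field⊖ and S-Pointer. -/
inductive Entails {V L : Type} (sgn : L → Sign) (load store : L)
    (C : Set (Constraint V L)) : Constraint V L → Prop where
  | ax {c} : c ∈ C → Entails sgn load store C c
  | tLeft {α β} : Entails sgn load store C (.sub α β) →
      Entails sgn load store C (.var α)
  | tRight {α β} : Entails sgn load store C (.sub α β) →
      Entails sgn load store C (.var β)
  | tInheritL {α β : DTV V L} {ℓ} : Entails sgn load store C (.sub α β) →
      Entails sgn load store C (.var (α.app ℓ)) →
      Entails sgn load store C (.var (β.app ℓ))
  | tInheritR {α β : DTV V L} {ℓ} : Entails sgn load store C (.sub α β) →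
      Entails sgn load store C (.var (β.app ℓ)) →
      Entails sgn load store C (.var (α.app ℓ))
  | tPrefix {α : DTV V L} {ℓ} : Entails sgn load store C (.var (α.app ℓ)) →
      Entails sgn load store C (.var α)
  | sRefl {α} : Entails sgn load store C (.var α) →
      Entails sgn load store C (.sub α α)
  | sTrans {α β γ} : Entails sgn load store C (.sub α β) →
      Entails sgn load store C (.sub β γ) →
      Entails sgn load store C (.sub α γ)
  | sFieldPos {α β : DTV V L} {ℓ} : Entails sgn load store C (.sub α β) →
      Entails sgn load store C (.var (β.app ℓ)) → sgn ℓ = .pos →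
      Entails sgn load store C (.sub (α.app ℓ) (β.app ℓ))
  | sFieldNeg {α β : DTV V L} {ℓ} : Entails sgn load store C (.sub α β) →
      Entails sgn load store C (.var (β.app ℓ)) → sgn ℓ = .neg →
      Entails sgn load store C (.sub (β.app ℓ) (α.app ℓ))
  | sPointer {α : DTV V L} : Entails sgn load store C (.var (α.app load)) →
      Entails sgn load store C (.var (α.app store)) →
      Entails sgn load store C (.sub (α.app store) (α.app load))

/-- `𝒞` is closed under T-Left, T-Right and T-Prefix. -/
def ClosedTLRP {V L : Type} (C : Set (Constraint V L)) : Prop :=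
  (∀ α β : DTV V L, Constraint.sub α β ∈ C →
      Constraint.var α ∈ C ∧ Constraint.var β ∈ C) ∧
  (∀ (α : DTV V L) (ℓ : L), Constraint.var (α.app ℓ) ∈ C →
      Constraint.var α ∈ C)

/-- Control states of the pushdown system `𝒫_𝒞`:
`Ṽ = ((lhs(𝒱_i) ⨿ rhs(𝒱_i) ⨿ 𝒱_u) × {⊕,⊖}) ∪ {#Start, #End}`.
`lt x a` is `(x_L)^a`, `rt x a` is `(x_R)^a`, `un x a` is `x^a` for
uninteresting `x`. -/
inductive Ctl (V : Type) : Type where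
  | start : Ctl V
  | fin : Ctl V
  | lt : V → Sign → Ctl V
  | rt : V → Sign → Ctl V
  | un : V → Sign → Ctl V

/-- Stack symbols `Σ̃ = Σ ∪ {v^⊕, v^⊖ : v ∈ 𝒱_i}`. -/
inductive StkSym (V L : Type) : Type where
  | lbl : L → StkSym V L
  | tv : V → Sign → StkSym V L

/-- A word of field labels seen as a stack word. -/
def symWord {V L : Type} (u : List L) : List (StkSym V L) :=
  u.map StkSym.lbl

/-- `lhs(x)^a`: tagged `x_L` if `x` is interesting, plain otherwise. -/
def lhsCtl {V : Type} (I : V → Bool) (x : V) (a : Sign) : Ctl V :=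
  if I x then .lt x a else .un x a

/-- `rhs(x)^a`: tagged `x_R` if `x` is interesting, plain otherwise. -/
def rhsCtl {V : Type} (I : V → Bool) (x : V) (a : Sign) : Ctl V :=
  if I x then .rt x a else .un x a

/-- A configuration of an unconstrained pushdown system: a control state
together with a stack word. -/
abbrev PDSConfig (V L : Type) : Type := Ctl V × List (StkSym V L)

/-- A transition rule `⟨X; u⟩ ↪ ⟨Y; v⟩`. -/
abbrev PDSRule (V L : Type) : Type := PDSConfig V L × PDSConfig V L

/-- `rule⊕(p.u ⊑ q.v) = ⟨lhs(p)^{⟨u⟩}; u⟩ ↪ ⟨rhs(q)^{⟨v⟩}; v⟩`. -/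
def rulePos {V L : Type} (I : V → Bool) (sgn : L → Sign)
    (c : DTV V L × DTV V L) : PDSRule V L :=
  ((lhsCtl I c.1.base (wordSign sgn c.1.word), symWord c.1.word),
   (rhsCtl I c.2.base (wordSign sgn c.2.word), symWord c.2.word))

/-- `rule⊖(p.u ⊑ q.v) = ⟨lhs(q)^{⊖·⟨v⟩}; v⟩ ↪ ⟨rhs(p)^{⊖·⟨u⟩}; u⟩`. -/
def ruleNeg {V L : Type} (I : V → Bool) (sgn : L → Sign)
    (c : DTV V L × DTV V L) : PDSRule V L :=
  ((lhsCtl I c.2.base (Sign.neg.mul (wordSign sgn c.2.word)), symWord c.2.word),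
   (rhsCtl I c.1.base (Sign.neg.mul (wordSign sgn c.1.word)), symWord c.1.word))

/-- The transition rules `Δ = Δ_𝒞 ∪ Δ_ptr ∪ Δ_start ∪ Δ_end` of the pushdown
system `𝒫_𝒞` associated to a set `𝒞` of subtype constraints between derived
type variables. -/
def Delta {V L : Type} (I : V → Bool) (sgn : L → Sign) (load store : L)
    (C : Set (DTV V L × DTV V L)) : Set (PDSRule V L) :=
  {r | ∃ c ∈ C, r = rulePos I sgn c ∨ r = ruleNeg I sgn c} ∪
  {r | ∃ v : DTV V L,
      r = rulePos I sgn (v.app store, v.app load) ∨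
      r = ruleNeg I sgn (v.app store, v.app load)} ∪
  {r | ∃ (v : V) (a : Sign), I v ∧
      r = ((.start, [StkSym.tv v a]), (.lt v a, ([] : List (StkSym V L))))} ∪
  {r | ∃ (v : V) (a : Sign), I v ∧
      r = ((.rt v a, ([] : List (StkSym V L))), (.fin, [StkSym.tv v a]))}

/-- One transition step of an unconstrained pushdown system:
`(X, w) ⟶ (Y, w')` iff there is a suffix `s` and a rule `⟨X; u⟩ ↪ ⟨Y; v⟩`
with `w = us` and `w' = vs`. -/
def PDSStep {V L : Type} (Δ : Set (PDSRule V L))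
    (c c' : PDSConfig V L) : Prop :=
  ∃ r ∈ Δ, ∃ s : List (StkSym V L),
    c = (r.1.1, r.1.2 ++ s) ∧ c' = (r.2.1, r.2.2 ++ s)

/-- The reflexive-transitive closure `⟶*` of the transition relation. -/
def PDSSteps {V L : Type} (Δ : Set (PDSRule V L)) :
    PDSConfig V L → PDSConfig V L → Prop :=
  Relation.ReflTransGen (PDSStep Δ)

/-- `Deriv(𝒫_𝒞)`, as a relation on triples `X^a u`: `X, Y` are interesting and
`(#Start, X^a u) ⟶* (#End, Y^b v)`. -/
def Deriv {V L : Type} (I : V → Bool) (sgn : L → Sign) (load store : L)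
    (C : Set (DTV V L × DTV V L)) :
    (V × Sign × List L) → (V × Sign × List L) → Prop :=
  fun p q =>
    I p.1 ∧ I q.1 ∧
      PDSSteps (Delta I sgn load store C)
        (.start, StkSym.tv p.1 p.2.1 :: symWord p.2.2)
        (.fin, StkSym.tv q.1 q.2.1 :: symWord q.2.2)

/-- `Deriv'(𝒫_𝒞) = {(X.u, Y.v) : (X^{⟨u⟩} u, Y^{⟨v⟩} v) ∈ Deriv(𝒫_𝒞)}`. -/
def Deriv' {V L : Type} (I : V → Bool) (sgn : L → Sign) (load store : L)
    (C : Set (DTV V L × DTV V L)) :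
    (V × List L) → (V × List L) → Prop :=
  fun p q =>
    Deriv I sgn load store C (p.1, wordSign sgn p.2, p.2)
      (q.1, wordSign sgn q.2, q.2)

/-!
Two symmetries of `𝒫_𝒞` are at work. Multiplying the sign of the control state by the signs of all
stack symbols gives an invariant of runs, so `(X^a u, Y^b v) ∈ Deriv(𝒫_𝒞)` forces
`a · ⟨u⟩ = b · ⟨v⟩`: either both tags agree with the variances of their words, or both are opposite
to them. On the other hand `rule⊖(c)` is `rule⊕(c)` reversed, with `L` and `R` exchanged and all
signs flipped, so runs can be reversed in this way, which exchanges the two cases.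
-/

namespace Sign

theorem pos_mul (a : Sign) : pos.mul a = a := rfl

theorem mul_self (a : Sign) : a.mul a = pos := by
  cases a <;> rfl

theorem mul_assoc (a b c : Sign) : (a.mul b).mul c = a.mul (b.mul c) := by
  cases a <;> cases b <;> cases c <;> rfl

theorem neg_mul_neg_mul (a : Sign) : neg.mul (neg.mul a) = a := by
  cases a <;> rfl

theorem ne_neg_mul (a : Sign) : a ≠ neg.mul a := by
  cases a <;> decide

theorem mul_eq_mul_iff {a b c d : Sign} :
    a.mul c = b.mul d ↔ (a = c ∧ b = d) ∨ (a = neg.mul c ∧ b = neg.mul d) := by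
  cases a <;> cases b <;> cases c <;> cases d <;> decide

end Sign

theorem wordSign_append {L : Type} (sgn : L → Sign) (u v : List L) :
    wordSign sgn (u ++ v) = (wordSign sgn u).mul (wordSign sgn v) := by
  induction u with
  | nil => rfl
  | cons x u ih => simp only [List.cons_append, wordSign, ih, Sign.mul_assoc]

theorem wordSign_map {K L : Type} (f : K → L) (sgn : L → Sign) (u : List K) :
    wordSign sgn (u.map f) = wordSign (sgn ∘ f) u := by
  induction u with
  | nil => rfl
  | cons x u ih => simp only [List.map_cons, wordSign, ih, Function.comp_apply]

section SignInvariant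

variable {V L : Type}

/-- The sign carried by a control state. The untagged states `#Start` and `#End` count as `⊕`, since
there the tag sits on top of the stack instead. -/
def Ctl.sign : Ctl V → Sign
  | .start => .pos
  | .fin => .pos
  | .lt _ a => a
  | .rt _ a => a
  | .un _ a => a

/-- The sign of a stack symbol: the variance of a label, and the tag `a` of `v^a`. -/
def StkSym.sign (sgn : L → Sign) : StkSym V L → Sign
  | .lbl ℓ => sgn ℓ
  | .tv _ a => a

/-- The total sign of a configuration, which is invariant along the runs of `𝒫_𝒞`. -/
def PDSConfig.sign (sgn : L → Sign) (c : PDSConfig V L) : Sign :=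
  c.1.sign.mul (wordSign (StkSym.sign sgn) c.2)

theorem wordSign_symWord (sgn : L → Sign) (u : List L) :
    wordSign (StkSym.sign sgn) (symWord u : List (StkSym V L)) = wordSign sgn u :=
  wordSign_map StkSym.lbl (StkSym.sign sgn) u

theorem lhsCtl_sign (I : V → Bool) (x : V) (a : Sign) : (lhsCtl I x a).sign = a := by
  unfold lhsCtl; split <;> rfl

theorem rhsCtl_sign (I : V → Bool) (x : V) (a : Sign) : (rhsCtl I x a).sign = a := by
  unfold rhsCtl; split <;> rfl

theorem rulePos_sign_eq (I : V → Bool) (sgn : L → Sign) (c : DTV V L × DTV V L) :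
    (rulePos I sgn c).1.sign sgn = (rulePos I sgn c).2.sign sgn := by
  simp only [rulePos, PDSConfig.sign, lhsCtl_sign, rhsCtl_sign, wordSign_symWord, Sign.mul_self]

theorem ruleNeg_sign_eq (I : V → Bool) (sgn : L → Sign) (c : DTV V L × DTV V L) :
    (ruleNeg I sgn c).1.sign sgn = (ruleNeg I sgn c).2.sign sgn := by
  simp only [ruleNeg, PDSConfig.sign, lhsCtl_sign, rhsCtl_sign, wordSign_symWord, Sign.mul_assoc,
    Sign.mul_self]

theorem sign_eq_of_mem_Delta {I : V → Bool} {sgn : L → Sign} {load store : L}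
    {C : Set (DTV V L × DTV V L)} {r : PDSRule V L} (hr : r ∈ Delta I sgn load store C) :
    r.1.sign sgn = r.2.sign sgn := by
  rcases hr with ((⟨c, -, rfl | rfl⟩ | ⟨p, rfl | rfl⟩) | ⟨x, a, -, rfl⟩) | ⟨x, a, -, rfl⟩
  · exact rulePos_sign_eq I sgn c
  · exact ruleNeg_sign_eq I sgn c
  · exact rulePos_sign_eq I sgn _
  · exact ruleNeg_sign_eq I sgn _
  · rfl
  · rfl

variable {sgn : L → Sign} {Δ : Set (PDSRule V L)} {c c' : PDSConfig V L}

theorem PDSStep.sign_eq (hΔ : ∀ r ∈ Δ, r.1.sign sgn = r.2.sign sgn) (h : PDSStep Δ c c') :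
    c.sign sgn = c'.sign sgn := by
  obtain ⟨r, hr, s, rfl, rfl⟩ := h
  have hr_sign := hΔ r hr
  simp only [PDSConfig.sign] at hr_sign ⊢
  rw [wordSign_append, wordSign_append, ← Sign.mul_assoc, ← Sign.mul_assoc, hr_sign]

theorem PDSSteps.sign_eq (hΔ : ∀ r ∈ Δ, r.1.sign sgn = r.2.sign sgn) (h : PDSSteps Δ c c') :
    c.sign sgn = c'.sign sgn := by
  induction h with
  | refl => rfl
  | tail _ hstep ih => exact ih.trans (hstep.sign_eq hΔ)

end SignInvariant

section Duality

variable {V L : Type}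

/-- The dual of a control state: left and right tags, and `#Start` and `#End`, are exchanged, and
the sign is flipped. -/
def Ctl.dual : Ctl V → Ctl V
  | .start => .fin
  | .fin => .start
  | .lt x a => .rt x (Sign.neg.mul a)
  | .rt x a => .lt x (Sign.neg.mul a)
  | .un x a => .un x (Sign.neg.mul a)

/-- The dual of a stack symbol: the sign of a tagged variable is flipped, and field labels are kept,
since duality leaves the words of derived type variables alone. -/
def StkSym.dual : StkSym V L → StkSym V L
  | .lbl ℓ => .lbl ℓ
  | .tv x a => .tv x (Sign.neg.mul a)

/-- The dual of a configuration, taken symbol by symbol. -/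
def PDSConfig.dual (c : PDSConfig V L) : PDSConfig V L :=
  (c.1.dual, c.2.map StkSym.dual)

/-- The dual of a transition rule `c ↪ c'`, namely the rule from the dual of `c'` to that of `c`. -/
def PDSRule.dual (r : PDSRule V L) : PDSRule V L :=
  (r.2.dual, r.1.dual)

theorem Ctl.dual_dual (x : Ctl V) : x.dual.dual = x := by
  cases x <;> simp only [Ctl.dual, Sign.neg_mul_neg_mul]

theorem StkSym.dual_involutive : Function.Involutive (StkSym.dual : StkSym V L → StkSym V L) := by
  rintro (ℓ | ⟨x, a⟩) <;> simp only [StkSym.dual, Sign.neg_mul_neg_mul]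

theorem PDSConfig.dual_dual (c : PDSConfig V L) : c.dual.dual = c := by
  simp only [PDSConfig.dual, Ctl.dual_dual, List.map_map, StkSym.dual_involutive.comp_self,
    List.map_id]

theorem PDSRule.dual_dual (r : PDSRule V L) : r.dual.dual = r := by
  simp only [PDSRule.dual, PDSConfig.dual_dual]

theorem map_dual_symWord (u : List L) :
    (symWord u : List (StkSym V L)).map StkSym.dual = symWord u :=
  List.map_map

theorem lhsCtl_dual (I : V → Bool) (x : V) (a : Sign) :
    (lhsCtl I x a).dual = rhsCtl I x (Sign.neg.mul a) := by
  unfold lhsCtl rhsCtl; split <;> rfl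

theorem rhsCtl_dual (I : V → Bool) (x : V) (a : Sign) :
    (rhsCtl I x a).dual = lhsCtl I x (Sign.neg.mul a) := by
  unfold lhsCtl rhsCtl; split <;> rfl

theorem rulePos_dual (I : V → Bool) (sgn : L → Sign) (c : DTV V L × DTV V L) :
    (rulePos I sgn c).dual = ruleNeg I sgn c := by
  simp only [rulePos, ruleNeg, PDSRule.dual, PDSConfig.dual, lhsCtl_dual, rhsCtl_dual,
    map_dual_symWord]

theorem ruleNeg_dual (I : V → Bool) (sgn : L → Sign) (c : DTV V L × DTV V L) :
    (ruleNeg I sgn c).dual = rulePos I sgn c := by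
  rw [← rulePos_dual, PDSRule.dual_dual]

theorem dual_mem_Delta {I : V → Bool} {sgn : L → Sign} {load store : L}
    {C : Set (DTV V L × DTV V L)} {r : PDSRule V L} (hr : r ∈ Delta I sgn load store C) :
    r.dual ∈ Delta I sgn load store C := by
  rcases hr with ((⟨c, hc, rfl | rfl⟩ | ⟨p, rfl | rfl⟩) | ⟨x, a, hx, rfl⟩) | ⟨x, a, hx, rfl⟩
  · exact .inl (.inl (.inl ⟨c, hc, .inr (rulePos_dual I sgn c)⟩))
  · exact .inl (.inl (.inl ⟨c, hc, .inl (ruleNeg_dual I sgn c)⟩))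
  · exact .inl (.inl (.inr ⟨p, .inr (rulePos_dual I sgn _)⟩))
  · exact .inl (.inl (.inr ⟨p, .inl (ruleNeg_dual I sgn _)⟩))
  · exact .inr ⟨x, Sign.neg.mul a, hx, rfl⟩
  · exact .inl (.inr ⟨x, Sign.neg.mul a, hx, rfl⟩)

variable {Δ : Set (PDSRule V L)} {c c' : PDSConfig V L}

theorem PDSStep.dual (hΔ : ∀ r ∈ Δ, r.dual ∈ Δ) (h : PDSStep Δ c c') :
    PDSStep Δ c'.dual c.dual := by
  obtain ⟨r, hr, s, rfl, rfl⟩ := h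
  refine ⟨r.dual, hΔ r hr, s.map StkSym.dual, ?_, ?_⟩ <;>
    simp only [PDSRule.dual, PDSConfig.dual, List.map_append]

theorem PDSSteps.dual (hΔ : ∀ r ∈ Δ, r.dual ∈ Δ) (h : PDSSteps Δ c c') :
    PDSSteps Δ c'.dual c.dual :=
  Relation.reflTransGen_swap.1 (h.lift PDSConfig.dual fun _ _ hstep => hstep.dual hΔ)

end Duality

namespace Deriv

variable {V L : Type} {I : V → Bool} {sgn : L → Sign} {load store : L}
  {C : Set (DTV V L × DTV V L)} {X Y : V} {a b : Sign} {u v : List L}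

theorem mul_wordSign_eq (h : Deriv I sgn load store C (X, a, u) (Y, b, v)) :
    a.mul (wordSign sgn u) = b.mul (wordSign sgn v) := by
  obtain ⟨-, -, hrun⟩ := h
  simpa only [PDSConfig.sign, Ctl.sign, wordSign, StkSym.sign, wordSign_symWord, Sign.pos_mul]
    using hrun.sign_eq fun _ => sign_eq_of_mem_Delta

theorem dual (h : Deriv I sgn load store C (X, a, u) (Y, b, v)) :
    Deriv I sgn load store C (Y, Sign.neg.mul b, v) (X, Sign.neg.mul a, u) := by
  obtain ⟨hX, hY, hrun⟩ := h
  refine ⟨hY, hX, ?_⟩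
  simpa only [PDSConfig.dual, Ctl.dual, StkSym.dual, List.map_cons, map_dual_symWord]
    using hrun.dual fun _ => dual_mem_Delta

end Deriv

theorem deriv_eq_derivPos_disjUnion_derivNeg_general {V L : Type} (I : V → Bool)
    (sgn : L → Sign) (load store : L) (C : Set (DTV V L × DTV V L))
    (X Y : V) (a b : Sign) (u v : List L) :
    (Deriv I sgn load store C (X, a, u) (Y, b, v) ↔
      ((a = wordSign sgn u ∧ b = wordSign sgn v ∧
          Deriv' I sgn load store C (X, u) (Y, v)) ∨
       (a = Sign.neg.mul (wordSign sgn u) ∧ b = Sign.neg.mul (wordSign sgn v) ∧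
          Deriv' I sgn load store C (Y, v) (X, u)))) ∧
    ¬((a = wordSign sgn u ∧ b = wordSign sgn v ∧
          Deriv' I sgn load store C (X, u) (Y, v)) ∧
      (a = Sign.neg.mul (wordSign sgn u) ∧ b = Sign.neg.mul (wordSign sgn v) ∧
          Deriv' I sgn load store C (Y, v) (X, u))) := by
  refine ⟨⟨fun h => ?_, ?_⟩, fun ⟨⟨ha, _⟩, ha', _⟩ => Sign.ne_neg_mul _ (ha.symm.trans ha')⟩
  · rcases Sign.mul_eq_mul_iff.1 h.mul_wordSign_eq with ⟨rfl, rfl⟩ | ⟨rfl, rfl⟩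
    · exact .inl ⟨rfl, rfl, h⟩
    · have hdual := h.dual
      simp only [Sign.neg_mul_neg_mul] at hdual
      exact .inr ⟨rfl, rfl, hdual⟩
  · rintro (⟨rfl, rfl, h⟩ | ⟨rfl, rfl, h⟩)
    · exact h
    · exact Deriv.dual h

/-- `Deriv(𝒫_𝒞)` is the disjoint union `Deriv⊕ ⨿ Deriv⊖`, where
`Deriv⊕ = {(X^{⟨u⟩} u, Y^{⟨v⟩} v) : (X.u, Y.v) ∈ Deriv'(𝒫_𝒞)}` and
`Deriv⊖ = {(Y^{⊖·⟨v⟩} v, X^{⊖·⟨u⟩} u) : (X.u, Y.v) ∈ Deriv'(𝒫_𝒞)}`; in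
particular `Deriv(𝒫_𝒞)` can be entirely reconstructed from `Deriv'(𝒫_𝒞)`. -/
theorem deriv_eq_derivPos_disjUnion_derivNeg {V L : Type} (I : V → Bool)
    (sgn : L → Sign) (load store : L)
    (hload : sgn load = .pos) (hstore : sgn store = .neg)
    (C : Set (DTV V L × DTV V L))
    (X Y : V) (a b : Sign) (u v : List L) :
    (Deriv I sgn load store C (X, a, u) (Y, b, v) ↔
      ((a = wordSign sgn u ∧ b = wordSign sgn v ∧
          Deriv' I sgn load store C (X, u) (Y, v)) ∨
       (a = Sign.neg.mul (wordSign sgn u) ∧ b = Sign.neg.mul (wordSign sgn v) ∧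
          Deriv' I sgn load store C (Y, v) (X, u)))) ∧
    ¬((a = wordSign sgn u ∧ b = wordSign sgn v ∧
          Deriv' I sgn load store C (X, u) (Y, v)) ∧
      (a = Sign.neg.mul (wordSign sgn u) ∧ b = Sign.neg.mul (wordSign sgn v) ∧
          Deriv' I sgn load store C (Y, v) (X, u))) :=
  deriv_eq_derivPos_disjUnion_derivNeg_general I sgn load store C X Y a b u v
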